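/- There is a universal constant C > 0 with the following property: for every k_F ≥ 1, every ℓ ∈ ℤ³∖{0}, every g ≥ 0, and every complex matrix K on L_ℓ satisfying |K_{r,s}| ≤ g·k_F^{-1}·(λ_{ℓ,r}+λ_{ℓ,s})^{-1} for all r,s ∈ L_ℓ, one has for every integer m ≥ 1: ‖K^m‖_{max,2} ≤ (Cg)^m·k_F^{-1/2}, ‖K^m‖_{max,1} ≤ (Cg)^m, ‖K^m‖_{HS} ≤ (Cg)^m, and for every q ∈ L_ℓ and r ∈ L_ℓ: |(K^m)_{r,q}| ≤ (Cg)^m·k_F^{-1}·e(q)^{-1} and (Σ_{r∈L_ℓ}|(K^m)_{r,q}|²)^{1/2} ≤ (Cg)^m·k_F^{-1/2}·e(q)^{-1/2}. -/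

import Mathlib

/-!
Everything follows from the lattice estimate `∑_{p ∈ L_ℓ} λ_{ℓ,p}⁻¹ ≤ C k_F`, uniform in `ℓ ≠ 0` and
`k_F ≥ 1` (`lens_sum_le`). Given it, induction on `m` shows
`|(K^m)_{r,s}| ≤ g (C g)^{m-1} k_F⁻¹ min(λ_r⁻¹, λ_s⁻¹)` (`matPow_entry_le`): for the bound in `r`
estimate the first factor by `λ_r⁻¹` and sum the second over the intermediate momentum, and
symmetrically for `s`. The norms are then sums of these entrywise bounds, using `λ ≥ 1/2` and
`e(q) ≤ 2 λ_q`.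

The lattice estimate needs only one counting tool (`lattice_count`). By Archimedes' hat-box theorem,
the part of a shell `c ≤ |x|² ≤ d` between two parallel planes at distance `h` has volume at most
`π h (d - c)`; comparing lattice points with unit cubes, the number of lattice points of size `O(k_F)`
in it is `O((h + 1)(d - c + k_F))`. For `|ℓ| ≥ 3 k_F` this bounds the size of a whole ball. For smaller
`ℓ`, it is applied to slabs of unit thickness where `λ < |ℓ|²` (`lens_sum_near`). Where `λ ≥ |ℓ|²`
that would cost a logarithm for short `ℓ`; there the lens points, which are pairwise inequivalent
modulo `ℓ`, are first translated along `ℓ` into the single slab `0 ≤ ℓ·p < |ℓ|²`, where the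
counting bound is applied to dyadic ranges of `λ` (`lens_sum_mid`).
-/

open scoped BigOperators
open MeasureTheory

noncomputable section

attribute [local instance] Classical.propDecidable

/-- The momentum lattice `ℤ³`. -/
abbrev Z3 : Type := Fin 3 → ℤ

/-- Squared Euclidean norm `|p|²` of an integer vector, as a real number. -/
def nsq (p : Z3) : ℝ := ∑ i, ((p i : ℝ)) ^ 2

/-- The Fermi ball `B_F = {k ∈ ℤ³ : |k| ≤ k_F}`. -/
def BF (kF : ℝ) : Set Z3 := {k | nsq k ≤ kF ^ 2}

/-- The lens `L_ℓ = B_F^c ∩ (B_F + ℓ)`. -/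
def lens (kF : ℝ) (ℓ : Z3) : Set Z3 := {p | p ∉ BF kF ∧ p - ℓ ∈ BF kF}

/-- The excitation energy `λ_{ℓ,p} = (|p|² − |p−ℓ|²)/2`. -/
def lam (ℓ p : Z3) : ℝ := (nsq p - nsq (p - ℓ)) / 2

/-- The energy gap `e(q) = | |q|² − min_{p ∈ B_F^c} |p|² + 1/2 |`. -/
def efun (kF : ℝ) (q : Z3) : ℝ := |nsq q - sInf (nsq '' (BF kF)ᶜ) + 1 / 2|

/-- Product of two (lens-supported) matrices, realized as functions on `ℤ³ × ℤ³`. -/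
def matMulC (A B : Z3 → Z3 → ℂ) : Z3 → Z3 → ℂ := fun r s => ∑' t : Z3, A r t * B t s

/-- `m`-th power of a matrix realized as a function on `ℤ³ × ℤ³`. -/
def matPowC (K : Z3 → Z3 → ℂ) : ℕ → Z3 → Z3 → ℂ
  | 0 => fun r s => if r = s then 1 else 0
  | n + 1 => matMulC K (matPowC K n)

/-- The norm `‖A‖_{max,2} = (Σ_{p∈L_ℓ} sup_{q∈L_ℓ} |A_{p,q}|²)^{1/2}`. -/
def normMax2 (kF : ℝ) (ℓ : Z3) (A : Z3 → Z3 → ℂ) : ℝ :=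
  Real.sqrt (∑' p : Z3, if p ∈ lens kF ℓ then (⨆ q ∈ lens kF ℓ, ‖A p q‖) ^ 2 else 0)

/-- The norm `‖A‖_{max,1} = Σ_{p∈L_ℓ} sup_{q∈L_ℓ} |A_{p,q}|`. -/
def normMax1 (kF : ℝ) (ℓ : Z3) (A : Z3 → Z3 → ℂ) : ℝ :=
  ∑' p : Z3, if p ∈ lens kF ℓ then (⨆ q ∈ lens kF ℓ, ‖A p q‖) else 0

/-- The Hilbert–Schmidt norm `‖A‖_{HS} = (Σ_{p,q∈L_ℓ} |A_{p,q}|²)^{1/2}`. -/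
def normHSC (kF : ℝ) (ℓ : Z3) (A : Z3 → Z3 → ℂ) : ℝ :=
  Real.sqrt (∑' rt : Z3 × Z3,
    if rt.1 ∈ lens kF ℓ ∧ rt.2 ∈ lens kF ℓ then ‖A rt.1 rt.2‖ ^ 2 else 0)



/-! ### Volume of a spherical shell between two parallel planes -/

/-- The area of a planar annulus depends only on the difference of the squared radii; negative
`c` or `d` are allowed. -/
lemma annulus_volume_le (c d : ℝ) (hcd : c ≤ d) :
    volume {y : Fin 2 → ℝ | c ≤ y 0 ^ 2 + y 1 ^ 2 ∧ y 0 ^ 2 + y 1 ^ 2 ≤ d}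
      ≤ ENNReal.ofReal (Real.pi * (d - c)) := by
  have hpi := Real.pi_pos
  rcases lt_or_ge d 0 with hd | hd
  · have : {y : Fin 2 → ℝ | c ≤ y 0 ^ 2 + y 1 ^ 2 ∧ y 0 ^ 2 + y 1 ^ 2 ≤ d} = ∅ := by
      ext y
      simp only [Set.mem_ofPred_eq, Set.mem_empty_iff_false, iff_false, not_and, not_le]
      intro _
      nlinarith [sq_nonneg (y 0), sq_nonneg (y 1)]
    simp [this]
  -- for `c < 0` the inner ball is empty, since `√c = 0`
  set A : Set (EuclideanSpace ℝ (Fin 2)) :=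
    Metric.closedBall 0 (√d) \ Metric.ball 0 (√c) with hA
  have hpre : {y : Fin 2 → ℝ | c ≤ y 0 ^ 2 + y 1 ^ 2 ∧ y 0 ^ 2 + y 1 ^ 2 ≤ d}
      ⊆ (WithLp.toLp 2) ⁻¹' A := by
    rintro y ⟨h1, h2⟩
    simp only [hA, Set.mem_preimage, Set.mem_sdiff, Metric.mem_closedBall, dist_zero_right,
      Metric.mem_ball, not_lt, EuclideanSpace.norm_eq, Fin.sum_univ_two, Real.norm_eq_abs, sq_abs]
    exact ⟨Real.sqrt_le_sqrt h2, Real.sqrt_le_sqrt h1⟩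
  have hAm : MeasurableSet A := measurableSet_closedBall.diff measurableSet_ball
  have hvol : volume ((WithLp.toLp 2 : (Fin 2 → ℝ) → _) ⁻¹' A) = volume A :=
    (PiLp.volume_preserving_toLp (Fin 2)).measure_preimage hAm.nullMeasurableSet
  refine (measure_mono hpre).trans (hvol.trans_le ?_)
  have hc2 : Real.sqrt c ^ 2 ≤ d := by
    rcases le_total 0 c with h | h
    · rwa [Real.sq_sqrt h]
    · rw [Real.sqrt_eq_zero_of_nonpos h]; simpa using hd
  have hc3 : c ≤ Real.sqrt c ^ 2 := by
    rcases le_total 0 c with h | h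
    · rw [Real.sq_sqrt h]
    · rw [Real.sqrt_eq_zero_of_nonpos h]; simpa using h
  rw [hA, measure_sdiff (Metric.ball_subset_closedBall.trans
      (Metric.closedBall_subset_closedBall (Real.sqrt_le_sqrt hcd)))
      measurableSet_ball.nullMeasurableSet measure_ball_lt_top.ne,
    EuclideanSpace.volume_closedBall_fin_two, EuclideanSpace.volume_ball_fin_two,
    ← ENNReal.ofReal_pow (Real.sqrt_nonneg _), ← ENNReal.ofReal_pow (Real.sqrt_nonneg _),
    Real.sq_sqrt hd, ← ENNReal.sub_mul (by simp), ← ENNReal.ofReal_sub _ (sq_nonneg _)]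
  rw [mul_comm, ← ENNReal.ofReal_mul hpi.le]
  exact ENNReal.ofReal_le_ofReal (by gcongr)

lemma axis_slab_volume_le (a b c d : ℝ) (hcd : c ≤ d) :
    volume {z : ℝ × (Fin 2 → ℝ) | (a ≤ z.1 ∧ z.1 ≤ b) ∧
        c ≤ z.1 ^ 2 + z.2 0 ^ 2 + z.2 1 ^ 2 ∧ z.1 ^ 2 + z.2 0 ^ 2 + z.2 1 ^ 2 ≤ d}
      ≤ ENNReal.ofReal (Real.pi * (d - c)) * ENNReal.ofReal (b - a) := by
  have hm : MeasurableSet {z : ℝ × (Fin 2 → ℝ) | (a ≤ z.1 ∧ z.1 ≤ b) ∧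
        c ≤ z.1 ^ 2 + z.2 0 ^ 2 + z.2 1 ^ 2 ∧ z.1 ^ 2 + z.2 0 ^ 2 + z.2 1 ^ 2 ≤ d} := by
    have hf : Continuous fun z : ℝ × (Fin 2 → ℝ) => z.1 ^ 2 + z.2 0 ^ 2 + z.2 1 ^ 2 := by
      fun_prop
    exact (((isClosed_le continuous_const continuous_fst).inter
      (isClosed_le continuous_fst continuous_const)).inter
      ((isClosed_le continuous_const hf).inter (isClosed_le hf continuous_const))).measurableSet
  rw [Measure.volume_eq_prod, Measure.prod_apply hm, ← Real.volume_Icc,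
    ← lintegral_indicator_const measurableSet_Icc]
  refine lintegral_mono fun t => ?_
  by_cases ht : t ∈ Set.Icc a b
  · rw [Set.indicator_of_mem ht]
    have := annulus_volume_le (c - t ^ 2) (d - t ^ 2) (by linarith)
    rw [sub_sub_sub_cancel_right] at this
    refine (measure_mono ?_).trans this
    rintro y ⟨-, h1, h2⟩
    simp only [Set.mem_ofPred_eq] at *
    constructor <;> linarith
  · rw [Set.indicator_of_notMem ht]
    refine (measure_mono_null ?_ measure_empty).le
    rintro y ⟨h1, -⟩
    exact (ht h1).elim

/-- Archimedes' hat-box bound for a shell `c ≤ |x|² ≤ d` cut by two planes orthogonal to an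
arbitrary unit vector `u`, reduced to the axis-parallel case by an orthonormal basis starting
with `u`. -/
lemma slab_volume_le (u : Fin 3 → ℝ) (hu : ∑ i, u i ^ 2 = 1) (a b c d : ℝ) (hcd : c ≤ d) :
    volume {x : Fin 3 → ℝ | (a ≤ ∑ i, u i * x i ∧ ∑ i, u i * x i ≤ b) ∧
        c ≤ ∑ i, x i ^ 2 ∧ ∑ i, x i ^ 2 ≤ d}
      ≤ ENNReal.ofReal (Real.pi * (d - c)) * ENNReal.ofReal (b - a) := by
  set u' : EuclideanSpace ℝ (Fin 3) := WithLp.toLp 2 u with hu'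
  have hnu : ‖u'‖ = 1 := by
    simp [EuclideanSpace.norm_eq, hu', hu]
  have hon : Orthonormal ℝ (({0} : Set (Fin 3)).domRestrict (fun _ => u')) := by
    constructor
    · intro i; exact hnu
    · intro i j hij
      exact (hij (Subsingleton.elim i j)).elim
  obtain ⟨B, hB⟩ := hon.exists_orthonormalBasis_extension_of_card_eq (by simp)
  have hB0 : B 0 = u' := hB 0 rfl
  have h1 := PiLp.volume_preserving_toLp (Fin 3)
  have h2 := B.measurePreserving_repr
  have h3 := PiLp.volume_preserving_ofLp (Fin 3)
  have h4 := volume_preserving_piFinSuccAbove (fun _ : Fin 3 => ℝ) 0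
  have h := h4.comp (h3.comp (h2.comp h1))
  refine le_trans ?_ (axis_slab_volume_le a b c d hcd)
  refine le_trans (measure_mono ?_) (h.measure_preimage_le _)
  intro x hx
  have e1 : B.repr (WithLp.toLp 2 x) 0 = ∑ i, u i * x i := by
    rw [B.repr_apply_apply, hB0, hu']
    simp [PiLp.inner_apply, mul_comm]
  have e2 : ∑ i, (B.repr (WithLp.toLp 2 x) i) ^ 2 = ∑ i, x i ^ 2 := by
    have := B.repr.norm_map (WithLp.toLp 2 x)
    rw [EuclideanSpace.norm_eq, EuclideanSpace.norm_eq,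
      Real.sqrt_inj (by positivity) (by positivity)] at this
    simpa using this
  rw [Set.mem_ofPred_eq, ← e1, ← e2, Fin.sum_univ_three] at hx
  exact hx

/-! ### Counting lattice points in a shell between two planes -/

/-- Euclidean inner product. -/
def dot (p q : Z3) : ℝ := ∑ i, (p i : ℝ) * (q i : ℝ)

lemma nsq_nonneg (p : Z3) : 0 ≤ nsq p := Finset.sum_nonneg fun _ _ => sq_nonneg _

lemma one_le_nsq {ℓ : Z3} (h : ℓ ≠ 0) : 1 ≤ nsq ℓ := by
  obtain ⟨i, hi⟩ := Function.ne_iff.mp h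
  have h1 : (1 : ℝ) ≤ (ℓ i : ℝ) ^ 2 := by
    have : (1 : ℤ) ≤ ℓ i ^ 2 := by
      have := sq_pos_of_ne_zero (R := ℤ) (a := ℓ i) hi
      omega
    exact_mod_cast this
  exact h1.trans (Finset.single_le_sum (f := fun i => (ℓ i : ℝ) ^ 2)
    (fun _ _ => sq_nonneg _) (Finset.mem_univ i))

lemma nsq_sub_smul (p ℓ : Z3) (j : ℤ) :
    nsq (p - j • ℓ) = nsq p - 2 * j * dot ℓ p + j ^ 2 * nsq ℓ := by
  simp only [nsq, dot, Fin.sum_univ_three, Pi.sub_apply, Pi.smul_apply, smul_eq_mul]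
  push_cast
  ring

lemma dot_sub_smul (p ℓ : Z3) (j : ℤ) : dot ℓ (p - j • ℓ) = dot ℓ p - j * nsq ℓ := by
  simp only [nsq, dot, Fin.sum_univ_three, Pi.sub_apply, Pi.smul_apply, smul_eq_mul]
  push_cast
  ring

lemma nsq_sub (p ℓ : Z3) : nsq (p - ℓ) = nsq p - 2 * dot ℓ p + nsq ℓ := by
  simpa using nsq_sub_smul p ℓ 1

lemma lam_eq (ℓ p : Z3) : lam ℓ p = dot ℓ p - nsq ℓ / 2 := by
  rw [lam, nsq_sub]; ring

lemma dot_sq_le (p q : Z3) : dot p q ^ 2 ≤ nsq p * nsq q :=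
  Finset.sum_mul_sq_le_sq_mul_sq _ _ _

lemma abs_dot_le (p q : Z3) {a b : ℝ} (ha : 0 ≤ a) (hb : 0 ≤ b) (hp : nsq p ≤ a ^ 2)
    (hq : nsq q ≤ b ^ 2) : |dot p q| ≤ a * b := by
  apply abs_le_of_sq_le_sq _ (by positivity)
  calc _ ≤ _ := dot_sq_le p q
    _ ≤ a ^ 2 * b ^ 2 := by gcongr; exact nsq_nonneg q
    _ = _ := by ring

/-- The half-open unit cube with lowest corner at the lattice point `p`. -/
def cube (p : Z3) : Set (Fin 3 → ℝ) :=
  Set.univ.pi fun i => Set.Ico (p i : ℝ) (p i + 1)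

lemma volume_cube (p : Z3) : volume (cube p) = 1 := by
  simp [cube, Real.volume_pi_Ico]

lemma measurableSet_cube (p : Z3) : MeasurableSet (cube p) :=
  MeasurableSet.univ_pi fun _ => measurableSet_Ico

lemma cube_disjoint {p q : Z3} (h : p ≠ q) : Disjoint (cube p) (cube q) := by
  rw [Set.disjoint_left]
  intro x hp hq
  apply h
  ext i
  have h1 := hp i trivial
  have h2 := hq i trivial
  rw [← Int.floor_eq_iff.mpr h1, ← Int.floor_eq_iff.mpr h2]

/-- Lattice points with `ℓ·p ∈ [a, b]` and `|p|² ∈ [c, d]` inside the ball of radius `4 k_F`,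
where `n = |ℓ|`: the unit cubes attached to them are disjoint, and moving by a vector of length at
most `2` changes `ℓ·p / n` by `O(1)` and `|p|²` by `O(k_F)`, so the hat-box volume bound
applies to a slightly enlarged shell. -/
lemma lattice_count {ℓ : Z3} {n a b c d kF : ℝ} (hn : 1 ≤ n) (hnℓ : nsq ℓ = n ^ 2) (hk : 1 ≤ kF)
    (hab : a ≤ b) (hcd : c ≤ d) (hd : d ≤ (4 * kF) ^ 2) (S : Finset Z3)
    (hS : ∀ p ∈ S, (a ≤ dot ℓ p ∧ dot ℓ p ≤ b) ∧ c ≤ nsq p ∧ nsq p ≤ d) :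
    (S.card : ℝ) ≤ 576 * ((b - a) / n + 1) * (d - c + kF) := by
  have hn0 : 0 < n := by linarith
  set u : Fin 3 → ℝ := fun i => ℓ i / n with hu
  have hu1 : ∑ i, u i ^ 2 = 1 := by
    simp only [hu, div_pow]
    rw [← Finset.sum_div]
    change nsq ℓ / _ = 1
    rw [hnℓ, div_self (by positivity)]
  have key := slab_volume_le u hu1 (a / n - 2) (b / n + 2) (c - 16 * kF) (d + 20 * kF)
    (by linarith)
  have hsub : (⋃ p ∈ S, cube p) ⊆ {x : Fin 3 → ℝ |
      (a / n - 2 ≤ ∑ i, u i * x i ∧ ∑ i, u i * x i ≤ b / n + 2) ∧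
        c - 16 * kF ≤ ∑ i, x i ^ 2 ∧ ∑ i, x i ^ 2 ≤ d + 20 * kF} := by
    intro x hx
    simp only [Set.mem_iUnion, exists_prop] at hx
    obtain ⟨p, hp, hx⟩ := hx
    obtain ⟨⟨h1, h2⟩, h3, h4⟩ := hS p hp
    set v : Fin 3 → ℝ := fun i => x i - p i with hv
    have hv0 : ∀ i, 0 ≤ v i := fun i => by have := (hx i trivial).1; simp only [hv]; linarith
    have hv1 : ∀ i, v i ≤ 1 := fun i => by have := (hx i trivial).2; simp only [hv]; linarith
    have hxv : ∀ i, x i = p i + v i := fun i => by simp [hv]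
    have hvv : ∑ i, v i ^ 2 ≤ 2 ^ 2 := by
      calc ∑ i, v i ^ 2 ≤ ∑ i : Fin 3, (1 : ℝ) :=
            Finset.sum_le_sum fun i _ => pow_le_one₀ (hv0 i) (hv1 i)
        _ ≤ 2 ^ 2 := by norm_num
    have hv3 : 0 ≤ ∑ i, v i ^ 2 := Finset.sum_nonneg fun _ _ => sq_nonneg _
    have e1 : ∑ i, u i * x i = dot ℓ p / n + ∑ i, u i * v i := by
      simp only [hxv, hu, dot, Fin.sum_univ_three]
      field_simp
      ring
    have e2 : ∑ i, x i ^ 2 = nsq p + 2 * ∑ i, p i * v i + ∑ i, v i ^ 2 := by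
      simp only [hxv, nsq, Fin.sum_univ_three]
      ring
    have b1 : |∑ i, u i * v i| ≤ 2 := by
      apply abs_le_of_sq_le_sq _ (by norm_num)
      have := Finset.sum_mul_sq_le_sq_mul_sq Finset.univ u v
      rw [hu1] at this
      linarith
    have b2 : |∑ i, (p i : ℝ) * v i| ≤ 8 * kF := by
      apply abs_le_of_sq_le_sq _ (by linarith)
      calc _ ≤ (∑ i, (p i : ℝ) ^ 2) * ∑ i, v i ^ 2 := Finset.sum_mul_sq_le_sq_mul_sq _ _ _
        _ ≤ (4 * kF) ^ 2 * 2 ^ 2 := by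
          gcongr
          exact h4.trans hd
        _ = _ := by ring
    have b1 := abs_le.mp b1
    have b2 := abs_le.mp b2
    have c1 : a / n ≤ dot ℓ p / n := by gcongr
    have c2 : dot ℓ p / n ≤ b / n := by gcongr
    rw [Set.mem_ofPred_eq, e1, e2]
    refine ⟨⟨?_, ?_⟩, ?_, ?_⟩ <;> linarith
  have hvol : volume (⋃ p ∈ S, cube p) = S.card := by
    rw [measure_biUnion_finset (fun p _ q _ h => cube_disjoint h)
      (fun p _ => measurableSet_cube p)]
    simp [volume_cube]
  have hle := (measure_mono hsub).trans key
  have hpi := Real.pi_pos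
  have hpos : 0 ≤ Real.pi * (d + 20 * kF - (c - 16 * kF)) :=
    mul_nonneg hpi.le (by linarith)
  rw [hvol, ← ENNReal.ofReal_mul hpos, ← ENNReal.ofReal_natCast,
    ENNReal.ofReal_le_ofReal_iff'] at hle
  have hba : 0 ≤ (b - a) / n := div_nonneg (by linarith) hn0.le
  have e3 : b / n + 2 - (a / n - 2) = (b - a) / n + 4 := by ring
  rw [e3] at hle
  have hfin : Real.pi * (d + 20 * kF - (c - 16 * kF)) * ((b - a) / n + 4)
      ≤ 576 * ((b - a) / n + 1) * (d - c + kF) := by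
    calc _ ≤ 4 * (36 * (d - c + kF)) * (4 * ((b - a) / n + 1)) := by
          exact mul_le_mul (mul_le_mul Real.pi_le_four (by linarith) (by linarith) (by norm_num))
            (by linarith) (by linarith) (mul_nonneg (by norm_num) (by linarith))
      _ = _ := by ring
  rcases hle with h | h
  · exact h.trans hfin
  · exact h.trans (mul_nonneg (by positivity) (by linarith))

/-! ### The lattice sum of inverse excitation energies -/

lemma nsq_cast (p : Z3) : nsq p = ((∑ i, p i ^ 2 : ℤ) : ℝ) := by
  simp [nsq]

lemma nsq_add_one_le {p q : Z3} (h : nsq p < nsq q) : nsq p + 1 ≤ nsq q := by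
  rw [nsq_cast, nsq_cast] at *
  exact_mod_cast Int.add_one_le_of_lt (by exact_mod_cast h)

/-- `|p|²` and `|p-ℓ|²` are integers separated by `k_F²`, so they differ by at least `1`. -/
lemma half_le_lam {kF : ℝ} {ℓ p : Z3} (hp : p ∈ lens kF ℓ) : 1 / 2 ≤ lam ℓ p := by
  have h1 : kF ^ 2 < nsq p := not_le.mp hp.1
  have h2 : nsq (p - ℓ) ≤ kF ^ 2 := hp.2
  have := nsq_add_one_le (h2.trans_lt h1)
  rw [lam]; linarith

lemma BF_finite (kF : ℝ) : (BF kF).Finite := by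
  refine (Set.finite_Icc (fun _ : Fin 3 => -⌈|kF|⌉) (fun _ => ⌈|kF|⌉)).subset ?_
  intro k hk
  have h : ∀ i, |(k i : ℝ)| ≤ |kF| := fun i => by
    rw [← sq_le_sq]
    exact (Finset.single_le_sum (f := fun i => (k i : ℝ) ^ 2)
      (fun _ _ => sq_nonneg _) (Finset.mem_univ i)).trans hk
  have h' : ∀ i, |k i| ≤ ⌈|kF|⌉ := fun i => by
    have := (h i).trans (Int.le_ceil _)
    exact_mod_cast this
  exact ⟨fun i => (abs_le.mp (h' i)).1, fun i => (abs_le.mp (h' i)).2⟩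

lemma lens_finite (kF : ℝ) (ℓ : Z3) : (lens kF ℓ).Finite :=
  ((BF_finite kF).preimage (f := fun p => p - ℓ) (sub_left_injective.injOn)).subset
    fun _ hp => hp.2

lemma sum_le_of_cover {α ι : Type*} (L : Finset α) (f : α → ℝ) (hf : ∀ p ∈ L, 0 ≤ f p)
    (I : Finset ι) (P : ι → α → Prop) (hcov : ∀ p ∈ L, ∃ i ∈ I, P i p) (b : ι → ℝ)
    (hb : ∀ i ∈ I, ∀ F : Finset α, (∀ p ∈ F, p ∈ L ∧ P i p) → ∑ p ∈ F, f p ≤ b i) : ∑ p ∈ L, f p ≤ ∑ i ∈ I, b i := by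
  calc ∑ p ∈ L, f p ≤ ∑ p ∈ L, ∑ i ∈ I, if P i p then f p else 0 := by
        refine Finset.sum_le_sum fun p hp => ?_
        obtain ⟨i, hi, hP⟩ := hcov p hp
        have h0 : ∀ j ∈ I, 0 ≤ if P j p then f p else 0 := fun j _ => by
          split_ifs
          · exact hf p hp
          · exact le_rfl
        have := Finset.single_le_sum h0 hi
        rwa [if_pos hP] at this
    _ = ∑ i ∈ I, ∑ p ∈ L.filter (P i), f p := by
        rw [Finset.sum_comm]
        exact Finset.sum_congr rfl fun i _ => (Finset.sum_filter _ _).symm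
    _ ≤ _ := Finset.sum_le_sum fun i hi => hb i hi _ fun _ hp => Finset.mem_filter.mp hp

lemma sum_inv_le_card {α : Type*} (L : Finset α) (f : α → ℝ) {m N : ℝ} (hm : 0 < m)
    (hf : ∀ p ∈ L, m ≤ f p) (hN : (L.card : ℝ) ≤ N) : ∑ p ∈ L, (f p)⁻¹ ≤ N / m := by
  calc ∑ p ∈ L, (f p)⁻¹ ≤ ∑ p ∈ L, m⁻¹ := by
        refine Finset.sum_le_sum fun p hp => ?_
        exact inv_anti₀ hm (hf p hp)
    _ = L.card * m⁻¹ := by simp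
    _ ≤ N / m := by rw [div_eq_mul_inv]; gcongr

section LensSum

variable {kF n : ℝ} {ℓ : Z3}

/-- If `|ℓ| ≥ 3 k_F`, the lens is a full translated ball, with `O(k_F³)` points, on which
`λ` is at least of order `k_F²`. -/
lemma lens_sum_far (hk : 1 ≤ kF) (hn : 1 ≤ n) (hnℓ : nsq ℓ = n ^ 2) (hbig : 3 * kF ≤ n)
    (L : Finset Z3) (hL : ∀ p ∈ L, p ∈ lens kF ℓ) :
    ∑ p ∈ L, (lam ℓ p)⁻¹ ≤ 2304 * kF := by
  have hdot : ∀ p ∈ L, |dot ℓ (p - ℓ)| ≤ n * kF := fun p hp =>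
    abs_dot_le _ _ (by linarith) (by linarith) hnℓ.le (hL p hp).2
  have hlam : ∀ p ∈ L, 3 / 2 * kF ^ 2 ≤ lam ℓ p := fun p hp => by
    have h1 := (abs_le.mp (hdot p hp)).1
    have h2 := dot_sub_smul p ℓ 1
    simp only [one_smul, Int.cast_one, one_mul] at h2
    rw [lam_eq]
    rw [hnℓ] at h2 ⊢
    nlinarith
  have hcard : (L.card : ℝ) ≤ 3456 * kF ^ 3 := by
    have hinj : (L.image fun p => p - ℓ).card = L.card :=
      Finset.card_image_of_injective _ sub_left_injective
    have := lattice_count (a := -(n * kF)) (b := n * kF) (c := 0) (d := kF ^ 2) hn hnℓ hk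
      (by nlinarith) (by positivity) (by nlinarith) (L.image fun p => p - ℓ) (by
        intro q hq
        obtain ⟨p, hp, rfl⟩ := Finset.mem_image.mp hq
        exact ⟨abs_le.mp (hdot p hp), nsq_nonneg _, (hL p hp).2⟩)
    rw [hinj] at this
    refine this.trans ?_
    have e : (n * kF - -(n * kF)) / n = 2 * kF := by field_simp; ring
    rw [e]
    have h1 : 576 * (2 * kF + 1) ≤ 576 * (3 * kF) := by linarith
    have h2 : kF ^ 2 - 0 + kF ≤ 2 * kF ^ 2 := by nlinarith
    calc _ ≤ 576 * (3 * kF) * (2 * kF ^ 2) :=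
          mul_le_mul h1 h2 (by nlinarith) (by linarith)
      _ = _ := by ring
  refine (sum_inv_le_card L _ (by positivity) hlam hcard).trans (le_of_eq ?_)
  field_simp
  norm_num

lemma lens_nsq_le (hk : 1 ≤ kF) (hn : 1 ≤ n) (hnℓ : nsq ℓ = n ^ 2) (hsmall : n ≤ 3 * kF)
    {p : Z3} (hp : p ∈ lens kF ℓ) : nsq p ≤ (4 * kF) ^ 2 := by
  have h1 := (abs_le.mp (abs_dot_le ℓ (p - ℓ) (by linarith) (by linarith) hnℓ.le hp.2)).2
  have h2 := nsq_sub p ℓ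
  have h3 := dot_sub_smul p ℓ 1
  simp only [one_smul, Int.cast_one, one_mul] at h3
  have h4 : nsq (p - ℓ) ≤ kF ^ 2 := hp.2
  rw [hnℓ] at h2 h3
  nlinarith

/-- The part `λ < |ℓ|²` is cut into slabs `j|ℓ| ≤ λ < (j+1)|ℓ|` of unit thickness. In such a slab
`k_F² < |p|² ≤ k_F² + 2(j+1)|ℓ|`, so it has `O(j|ℓ| + k_F)` points; each of the `O(|ℓ|)` slabs
with `j ≥ 1` therefore contributes `O(1 + k_F/|ℓ|)`. -/
lemma lens_sum_near (hk : 1 ≤ kF) (hn : 1 ≤ n) (hnℓ : nsq ℓ = n ^ 2) (hsmall : n ≤ 3 * kF)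
    (L : Finset Z3) (hL : ∀ p ∈ L, p ∈ lens kF ℓ) (hlt : ∀ p ∈ L, lam ℓ p < n ^ 2) :
    ∑ p ∈ L, (lam ℓ p)⁻¹ ≤ 46080 * kF := by
  have hn0 : 0 < n := by linarith
  have hcov := sum_le_of_cover L (fun p => (lam ℓ p)⁻¹)
    (fun p hp => inv_nonneg.mpr (by linarith [half_le_lam (hL p hp)]))
    (Finset.range ⌈n⌉₊) (fun j p => j * n ≤ lam ℓ p ∧ lam ℓ p < (j + 1) * n)
    (fun p hp => by
      have h0 : 0 ≤ lam ℓ p / n := div_nonneg (by linarith [half_le_lam (hL p hp)]) hn0.le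
      have h1 := Nat.floor_le h0
      have h2 := Nat.lt_floor_add_one (lam ℓ p / n)
      rw [le_div_iff₀ hn0] at h1
      rw [div_lt_iff₀ hn0] at h2
      refine ⟨⌊lam ℓ p / n⌋₊, ?_, h1, h2⟩
      rw [Finset.mem_range, Nat.lt_ceil]
      have := hlt p hp
      nlinarith)
    (fun j => (if j = 0 then 16128 * kF else 0) + 1152 * (4 + kF / n))
    (fun j _ F hF => by
      have hcard := lattice_count (a := j * n + n ^ 2 / 2) (b := (j + 1) * n + n ^ 2 / 2)
        (c := kF ^ 2) (d := min (kF ^ 2 + 2 * (j + 1) * n) ((4 * kF) ^ 2)) hn hnℓ hk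
        (by linarith) (le_min (by have : 0 ≤ 2 * ((j : ℝ) + 1) * n := by positivity
                                  linarith) (by nlinarith)) (min_le_right _ _) F (by
          intro p hp
          obtain ⟨hpL, hp1, hp2⟩ := hF p hp
          have hl := hL p hpL
          have h1 := lam_eq ℓ p
          have h2 : nsq (p - ℓ) ≤ kF ^ 2 := hl.2
          have h3 : lam ℓ p = (nsq p - nsq (p - ℓ)) / 2 := rfl
          rw [hnℓ] at h1
          exact ⟨⟨by linarith, by linarith⟩, (not_le.mp hl.1).le,
            le_min (by linarith) (lens_nsq_le hk hn hnℓ hsmall hl)⟩)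
      have hN : (F.card : ℝ) ≤ 1152 * (2 * (j + 1) * n + kF) := by
        refine hcard.trans ?_
        have e : ((j + 1) * n + n ^ 2 / 2 - (j * n + n ^ 2 / 2)) / n = 1 := by
          field_simp; ring
        rw [e]
        have := min_le_left (kF ^ 2 + 2 * (j + 1) * n) ((4 * kF) ^ 2)
        linarith
      have hpos : 0 ≤ kF / n := by positivity
      -- in the lowest slab only `λ ≥ 1/2` is available
      rcases Nat.eq_zero_or_pos j with rfl | hj
      · refine (sum_inv_le_card F _ (m := 1 / 2) (by norm_num)
          (fun p hp => half_le_lam (hL p (hF p hp).1)) hN).trans ?_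
        simp only [Nat.cast_zero, if_true]
        linarith
      · have hj1 : (1 : ℝ) ≤ j := by exact_mod_cast hj
        refine (sum_inv_le_card F _ (m := j * n) (by positivity)
          (fun p hp => (hF p hp).2.1) hN).trans ?_
        rw [if_neg hj.ne', zero_add, div_le_iff₀ (by positivity)]
        have e : 1152 * (4 + kF / n) * (j * n) = 1152 * (4 * j * n + j * kF) := by
          field_simp
        rw [e]
        have : kF ≤ j * kF := by nlinarith
        have : n ≤ j * n := by nlinarith
        nlinarith)
  refine hcov.trans ?_
  rw [Finset.sum_add_distrib, Finset.sum_ite_eq', Finset.sum_const, Finset.card_range,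
    nsmul_eq_mul]
  have h1 : (⌈n⌉₊ : ℝ) ≤ 2 * n := by linarith [Nat.ceil_lt_add_one hn0.le]
  have h2 : (⌈n⌉₊ : ℝ) * (1152 * (4 + kF / n)) ≤ 29952 * kF := by
    calc _ ≤ 2 * n * (1152 * (4 + kF / n)) := by gcongr
      _ = 9216 * n + 2304 * kF := by field_simp; ring
      _ ≤ _ := by linarith
  have h3 : (if 0 ∈ Finset.range ⌈n⌉₊ then 16128 * kF else 0) ≤ 16128 * kF := by
    split_ifs <;> linarith
  linarith

/-- Applied in both directions, this shows that each class modulo `ℓ` meets the lens at most once: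
beyond a lens point the norm increases along `ℓ`, so no later translate
`q` has `q - ℓ` in the Fermi ball. -/
lemma lens_line_le {p q : Z3} {i : ℤ} (hp : p ∈ lens kF ℓ) (hq : q ∈ lens kF ℓ)
    (h : q = p - i • ℓ) : 0 ≤ i := by
  by_contra! hi
  have e : q - ℓ = p - (i + 1) • ℓ := by rw [h, add_smul, one_smul]; abel
  have h1 : nsq (q - ℓ) ≤ kF ^ 2 := hq.2
  have h2 : kF ^ 2 < nsq p := not_le.mp hp.1
  rw [e, nsq_sub_smul] at h1
  have h3 := half_le_lam hp
  rw [lam_eq] at h3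
  have h4 := nsq_nonneg ℓ
  have h5 : ((i + 1 : ℤ) : ℝ) ≤ 0 := by exact_mod_cast hi
  nlinarith [sq_nonneg ((i + 1 : ℤ) : ℝ), mul_nonneg (sq_nonneg ((i + 1 : ℤ) : ℝ)) h4,
    mul_nonneg (neg_nonneg.mpr h5) (show 0 ≤ dot ℓ p by linarith)]

/-- The part `λ ≥ |ℓ|²` is cut dyadically at `λ ∼ T|ℓ|²`, `T = 2^k`. Slabs of bounded thickness
would lose a logarithm here; instead each point is replaced by its representative modulo `ℓ` with
`0 ≤ ℓ·p' < |ℓ|²`. The representatives are distinct and satisfy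
`k_F² - O(T²|ℓ|²) ≤ |p'|² ≤ k_F²`, so there are `O(|ℓ|(T²|ℓ|² + k_F))` of them and the dyadic piece
contributes `O(T|ℓ| + k_F/T)`. Both geometric series are `O(k_F)`, as `T|ℓ| ≤ 4 k_F`. -/
lemma lens_sum_mid (hk : 1 ≤ kF) (hn : 1 ≤ n) (hnℓ : nsq ℓ = n ^ 2) (hsmall : n ≤ 3 * kF)
    (L : Finset Z3) (hL : ∀ p ∈ L, p ∈ lens kF ℓ) (hge : ∀ p ∈ L, n ^ 2 ≤ lam ℓ p) :
    ∑ p ∈ L, (lam ℓ p)⁻¹ ≤ 149760 * kF := by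
  have hn0 : 0 < n := by linarith
  have hn2 : 0 < n ^ 2 := by positivity
  obtain ⟨K, hK1, hK2⟩ := exists_nat_pow_near (x := 4 * kF / n) (y := 2)
    (by rw [le_div_iff₀ hn0]; linarith) (by norm_num)
  have hcov := sum_le_of_cover L (fun p => (lam ℓ p)⁻¹)
    (fun p hp => inv_nonneg.mpr (by linarith [half_le_lam (hL p hp)]))
    (Finset.range (K + 1)) (fun k p => 2 ^ k * n ^ 2 ≤ lam ℓ p ∧ lam ℓ p < 2 ^ (k + 1) * n ^ 2)
    (fun p hp => by
      obtain ⟨k, h1, h2⟩ := exists_nat_pow_near (x := lam ℓ p / n ^ 2) (y := 2)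
        (by rw [le_div_iff₀ hn2]; linarith [hge p hp]) (by norm_num)
      rw [le_div_iff₀ hn2] at h1
      rw [div_lt_iff₀ hn2] at h2
      refine ⟨k, ?_, h1, h2⟩
      rw [Finset.mem_range]
      by_contra! hkK
      have h3 : (2 : ℝ) ^ (K + 1) ≤ 2 ^ k := pow_le_pow_right₀ (by norm_num) hkK
      have h4 := (abs_le.mp (abs_dot_le ℓ p (by linarith) (by linarith) hnℓ.le
        (lens_nsq_le hk hn hnℓ hsmall (hL p hp)))).2
      have h5 := lam_eq ℓ p
      have h6 := hK2.trans_le h3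
      rw [div_lt_iff₀ hn0] at h6
      rw [hnℓ] at h5
      nlinarith)
    (fun k => 18432 * n * 2 ^ k + 1152 * kF * (1 / 2) ^ k)
    (fun k _ F hF => by
      set T : ℝ := 2 ^ k with hT
      have hT1 : 1 ≤ T := one_le_pow₀ (by norm_num)
      have hT2 : (1 / 2 : ℝ) ^ k = 1 / T := by rw [hT, one_div_pow]
      set φ : Z3 → Z3 := fun p => p - ⌊dot ℓ p / n ^ 2⌋ • ℓ with hφ
      have hinj : Set.InjOn φ F := by
        intro p hp q hq hpq
        have hpl := hL p (hF p hp).1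
        have hql := hL q (hF q hq).1
        set i := ⌊dot ℓ p / n ^ 2⌋
        set j := ⌊dot ℓ q / n ^ 2⌋
        have e : p - i • ℓ = q - j • ℓ := hpq
        have e1 : q = p - (i - j) • ℓ := by
          rw [sub_smul, sub_sub_eq_add_sub, add_sub_right_comm, e]; abel
        have e2 : p = q - (j - i) • ℓ := by
          rw [sub_smul, sub_sub_eq_add_sub, add_sub_right_comm, ← e]; abel
        have h1 := lens_line_le hpl hql e1
        have h2 := lens_line_le hql hpl e2
        have h3 : i - j = 0 := by omega
        rw [e1, h3, zero_smul, sub_zero]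
      have hcard := lattice_count (a := 0) (b := n ^ 2) (c := kF ^ 2 - 16 * T ^ 2 * n ^ 2)
        (d := kF ^ 2) hn hnℓ hk hn2.le (by nlinarith [mul_pos hn0 hn0, sq_nonneg (T * n)])
        (by nlinarith) (F.image φ) (by
          intro q hq
          obtain ⟨p, hp, rfl⟩ := Finset.mem_image.mp hq
          obtain ⟨hpL, hp1, hp2⟩ := hF p hp
          have hl := hL p hpL
          set D := dot ℓ p with hD
          set j := ⌊D / n ^ 2⌋ with hj
          have hj1 : (j : ℝ) * n ^ 2 ≤ D := by
            rw [← le_div_iff₀ hn2]; exact Int.floor_le _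
          have hj2 : D < (j + 1) * n ^ 2 := by
            rw [← div_lt_iff₀ hn2]; exact Int.lt_floor_add_one _
          have h1 := lam_eq ℓ p
          rw [hnℓ, ← hD] at h1
          have hD1 : D ≤ 4 * T * n ^ 2 := by
            rw [pow_succ] at hp2
            nlinarith
          have hD0 : n ^ 2 ≤ D := by nlinarith
          have hj3 : (1 : ℝ) ≤ j := by
            have : (1 : ℤ) ≤ j := by
              rw [hj, Int.le_floor, le_div_iff₀ hn2]; simpa using hD0
            exact_mod_cast this
          have h2 : nsq (p - ℓ) ≤ kF ^ 2 := hl.2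
          rw [nsq_sub, hnℓ, ← hD] at h2
          have h3 : kF ^ 2 < nsq p := not_le.mp hl.1
          change (0 ≤ dot ℓ (p - j • ℓ) ∧ dot ℓ (p - j • ℓ) ≤ n ^ 2) ∧
            kF ^ 2 - 16 * T ^ 2 * n ^ 2 ≤ nsq (p - j • ℓ) ∧ nsq (p - j • ℓ) ≤ kF ^ 2
          rw [dot_sub_smul, nsq_sub_smul, hnℓ, ← hD]
          refine ⟨⟨by linarith, by linarith⟩, ?_, ?_⟩
          · -- `|p'|²` is at least the squared distance `|p|² - D²/n²` from `p` to the axis `ℝℓ`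
            have h4 : 2 * j * D - j ^ 2 * n ^ 2 ≤ 16 * T ^ 2 * n ^ 2 := by
              have : n ^ 2 * (2 * j * D - j ^ 2 * n ^ 2) ≤ n ^ 2 * (16 * T ^ 2 * n ^ 2) := by
                calc _ ≤ D ^ 2 := by nlinarith [sq_nonneg (D - j * n ^ 2)]
                  _ ≤ (4 * T * n ^ 2) ^ 2 := by
                    gcongr
                    linarith
                  _ = _ := by ring
              exact le_of_mul_le_mul_left this hn2
            linarith
          · -- the norm is convex along the line and `p'` is no farther from its minimum than `p - ℓ`
            nlinarith [mul_nonneg (sub_nonneg.mpr hj3) (sub_nonneg.mpr hj1),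
              mul_nonneg (sub_nonneg.mpr hj3) (sub_nonneg.mpr hD0)])
      rw [Finset.card_image_of_injOn hinj] at hcard
      have hN : (F.card : ℝ) ≤ 1152 * n * (16 * T ^ 2 * n ^ 2 + kF) := by
        refine hcard.trans ?_
        have e : (n ^ 2 - 0) / n = n := by field_simp; ring
        rw [e]
        calc _ = 576 * (n + 1) * (16 * T ^ 2 * n ^ 2 + kF) := by ring
          _ ≤ 576 * (n + n) * (16 * T ^ 2 * n ^ 2 + kF) := by gcongr
          _ = _ := by ring
      refine (sum_inv_le_card F _ (m := T * n ^ 2) (by positivity)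
          (fun p hp => (hF p hp).2.1) hN).trans ?_
      rw [hT2, div_le_iff₀ (by positivity)]
      have e : (18432 * n * T + 1152 * kF * (1 / T)) * (T * n ^ 2)
          = 18432 * n ^ 3 * T ^ 2 + 1152 * kF * n ^ 2 := by field_simp
      rw [e]
      nlinarith [mul_nonneg (show 0 ≤ kF by linarith) (show 0 ≤ n * (n - 1) by nlinarith)])
  refine hcov.trans ?_
  rw [Finset.sum_add_distrib, ← Finset.mul_sum, ← Finset.mul_sum]
  have g1 : ∑ k ∈ Finset.range (K + 1), (2 : ℝ) ^ k ≤ 8 * kF / n := by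
    rw [geom_sum_eq (by norm_num)]
    rw [le_div_iff₀ hn0] at hK1 ⊢
    rw [pow_succ]
    nlinarith
  have g2 : ∑ k ∈ Finset.range (K + 1), (1 / 2 : ℝ) ^ k ≤ 2 := by
    exact sum_geometric_two_le _
  calc _ ≤ 18432 * n * (8 * kF / n) + 1152 * kF * 2 := by gcongr
    _ = _ := by field_simp; ring

/-- The lattice estimate `∑_{p ∈ L_ℓ} λ_{ℓ,p}⁻¹ ≤ C k_F`, uniformly in `ℓ ≠ 0`. -/
lemma lens_sum_le (hk : 1 ≤ kF) (hℓ : ℓ ≠ 0) (L : Finset Z3) (hL : ∀ p ∈ L, p ∈ lens kF ℓ) :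
    ∑ p ∈ L, (lam ℓ p)⁻¹ ≤ 200000 * kF := by
  have h1 := one_le_nsq hℓ
  have hnℓ : nsq ℓ = √(nsq ℓ) ^ 2 := (Real.sq_sqrt (by linarith)).symm
  have hn : 1 ≤ √(nsq ℓ) := Real.one_le_sqrt.mpr h1
  rcases le_total (3 * kF) (√(nsq ℓ)) with h | h
  · linarith [lens_sum_far hk hn hnℓ h L hL]
  · rw [← Finset.sum_filter_add_sum_filter_not L (fun p => lam ℓ p < √(nsq ℓ) ^ 2)]
    have a1 := lens_sum_near hk hn hnℓ h (L.filter fun p => lam ℓ p < √(nsq ℓ) ^ 2)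
      (fun p hp => hL p (Finset.mem_filter.mp hp).1) (fun p hp => (Finset.mem_filter.mp hp).2)
    have a2 := lens_sum_mid hk hn hnℓ h (L.filter fun p => ¬ lam ℓ p < √(nsq ℓ) ^ 2)
      (fun p hp => hL p (Finset.mem_filter.mp hp).1)
      (fun p hp => not_lt.mp (Finset.mem_filter.mp hp).2)
    linarith

end LensSum

/-! ### Powers of the kernel -/

/-- The energy gap is dominated by the excitation energy, because the minimum of `|p|²` off the
Fermi ball exceeds `|q - ℓ|²` by at least `1`. The lower bound makes `e(q)` invertible. -/
lemma half_le_efun {kF : ℝ} {ℓ q : Z3} (hq : q ∈ lens kF ℓ) :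
    1 / 2 ≤ efun kF q ∧ efun kF q ≤ 2 * lam ℓ q := by
  have hqm : nsq q ∈ nsq '' (BF kF)ᶜ := ⟨q, hq.1, rfl⟩
  have h1 : sInf (nsq '' (BF kF)ᶜ) ≤ nsq q :=
    csInf_le ⟨0, by rintro _ ⟨p, -, rfl⟩; exact nsq_nonneg p⟩ hqm
  have h2 : nsq (q - ℓ) + 1 ≤ sInf (nsq '' (BF kF)ᶜ) := by
    refine le_csInf ⟨_, hqm⟩ ?_
    rintro _ ⟨p, hp, rfl⟩
    have h3 : nsq (q - ℓ) ≤ kF ^ 2 := hq.2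
    exact nsq_add_one_le (h3.trans_lt (not_le.mp hp))
  rw [efun, abs_of_nonneg (by linarith), lam]
  constructor <;> linarith

lemma matPowC_one (K : Z3 → Z3 → ℂ) (r s : Z3) : matPowC K 1 r s = K r s := by
  simp only [matPowC, matMulC]
  rw [tsum_eq_single s (fun t ht => by simp [ht])]
  simp

lemma iSup_lens_nonneg (kF : ℝ) (ℓ : Z3) (f : Z3 → ℂ) : 0 ≤ ⨆ q ∈ lens kF ℓ, ‖f q‖ :=
  Real.iSup_nonneg fun _ => Real.iSup_nonneg fun _ => norm_nonneg _

lemma iSup_lens_le {kF : ℝ} {ℓ : Z3} {f : Z3 → ℂ} {b : ℝ} (hb : 0 ≤ b)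
    (h : ∀ q ∈ lens kF ℓ, ‖f q‖ ≤ b) : ⨆ q ∈ lens kF ℓ, ‖f q‖ ≤ b :=
  Real.iSup_le (fun q => Real.iSup_le (fun hq => h q hq) hb) hb

/-- The powers of `K` decay in the energy of either argument: the sum over the intermediate momentum
of the factor `λ_t⁻¹` costs at most `c k_F`, which the extra `k_F⁻¹` cancels. -/
lemma matPow_entry_le {kF c g : ℝ} {ℓ : Z3} {K : Z3 → Z3 → ℂ} (hk : 1 ≤ kF) (hc : 0 ≤ c)
    (hg : 0 ≤ g) (L : Finset Z3) (hL : ∀ p, p ∈ L ↔ p ∈ lens kF ℓ)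
    (hsum : ∑ p ∈ L, (lam ℓ p)⁻¹ ≤ c * kF)
    (h0 : ∀ r s : Z3, (r ∉ lens kF ℓ ∨ s ∉ lens kF ℓ) → K r s = 0)
    (hK : ∀ r ∈ lens kF ℓ, ∀ s ∈ lens kF ℓ, ‖K r s‖ ≤ g * kF⁻¹ * (lam ℓ r + lam ℓ s)⁻¹)
    (m : ℕ) : ∀ r ∈ lens kF ℓ, ∀ s ∈ lens kF ℓ,
      ‖matPowC K (m + 1) r s‖ ≤ g * (c * g) ^ m * kF⁻¹ * (lam ℓ r)⁻¹ ∧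
      ‖matPowC K (m + 1) r s‖ ≤ g * (c * g) ^ m * kF⁻¹ * (lam ℓ s)⁻¹ := by
  have hk0 : 0 < kF := by linarith
  have hlpos : ∀ p ∈ lens kF ℓ, 0 < lam ℓ p := fun p hp => by linarith [half_le_lam hp]
  have hKr : ∀ r ∈ lens kF ℓ, ∀ s ∈ lens kF ℓ, ‖K r s‖ ≤ g * kF⁻¹ * (lam ℓ r)⁻¹ := by
    intro r hr s hs
    refine (hK r hr s hs).trans ?_
    have := inv_anti₀ (hlpos r hr) (show lam ℓ r ≤ lam ℓ r + lam ℓ s by linarith [hlpos s hs])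
    gcongr
  have hKs : ∀ r ∈ lens kF ℓ, ∀ s ∈ lens kF ℓ, ‖K r s‖ ≤ g * kF⁻¹ * (lam ℓ s)⁻¹ := by
    intro r hr s hs
    refine (hK r hr s hs).trans ?_
    have := inv_anti₀ (hlpos s hs) (show lam ℓ s ≤ lam ℓ r + lam ℓ s by linarith [hlpos r hr])
    gcongr
  induction m with
  | zero =>
    intro r hr s hs
    rw [zero_add, matPowC_one, pow_zero, mul_one]
    exact ⟨hKr r hr s hs, hKs r hr s hs⟩
  | succ m ih =>
    intro r hr s hs
    have e : matPowC K (m + 1 + 1) r s = ∑ t ∈ L, K r t * matPowC K (m + 1) t s :=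
      tsum_eq_sum fun t ht => by
        rw [h0 r t (Or.inr fun h => ht ((hL t).mpr h)), zero_mul]
    have hle : ‖matPowC K (m + 1 + 1) r s‖ ≤ ∑ t ∈ L, ‖K r t‖ * ‖matPowC K (m + 1) t s‖ := by
      rw [e]
      exact (norm_sum_le _ _).trans_eq (Finset.sum_congr rfl fun t _ => norm_mul _ _)
    have hl : ∀ p ∈ lens kF ℓ, 0 ≤ (lam ℓ p)⁻¹ := fun p hp => inv_nonneg.mpr (hlpos p hp).le
    have hstep : ∀ x : ℝ, 0 ≤ x →
        (∀ t ∈ L, ‖K r t‖ * ‖matPowC K (m + 1) t s‖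
          ≤ (g * kF⁻¹ * (g * (c * g) ^ m * kF⁻¹) * x) * (lam ℓ t)⁻¹) →
        ‖matPowC K (m + 1 + 1) r s‖ ≤ g * (c * g) ^ (m + 1) * kF⁻¹ * x := by
      intro x hx h
      calc _ ≤ _ := hle
        _ ≤ ∑ t ∈ L, (g * kF⁻¹ * (g * (c * g) ^ m * kF⁻¹) * x) * (lam ℓ t)⁻¹ :=
          Finset.sum_le_sum h
        _ = (g * kF⁻¹ * (g * (c * g) ^ m * kF⁻¹) * x) * ∑ t ∈ L, (lam ℓ t)⁻¹ := by
          rw [Finset.mul_sum]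
        _ ≤ (g * kF⁻¹ * (g * (c * g) ^ m * kF⁻¹) * x) * (c * kF) := by gcongr
        _ = _ := by rw [pow_succ]; field_simp
    constructor
    · refine hstep _ (hl r hr) fun t ht => ?_
      have ht' := (hL t).mp ht
      have hr0 := hl r hr
      calc _ ≤ (g * kF⁻¹ * (lam ℓ r)⁻¹) * (g * (c * g) ^ m * kF⁻¹ * (lam ℓ t)⁻¹) :=
            mul_le_mul (hKr r hr t ht') (ih t ht' s hs).1 (norm_nonneg _) (by positivity)
        _ = _ := by ring
    · refine hstep _ (hl s hs) fun t ht => ?_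
      have ht' := (hL t).mp ht
      have ht0 := hl t ht'
      calc _ ≤ (g * kF⁻¹ * (lam ℓ t)⁻¹) * (g * (c * g) ^ m * kF⁻¹ * (lam ℓ s)⁻¹) :=
            mul_le_mul (hKs r hr t ht') (ih t ht' s hs).2 (norm_nonneg _) (by positivity)
        _ = _ := by ring


/-- Norm bounds for powers of the Bogoliubov kernel (Lemma on bounds on `K`). -/
theorem stmt3 : ∃ C : ℝ, 0 < C ∧ ∀ kF : ℝ, 1 ≤ kF → ∀ ℓ : Z3, ℓ ≠ 0 →
    ∀ g : ℝ, 0 ≤ g → ∀ K : Z3 → Z3 → ℂ,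
      (∀ r s : Z3, (r ∉ lens kF ℓ ∨ s ∉ lens kF ℓ) → K r s = 0) →
      (∀ r ∈ lens kF ℓ, ∀ s ∈ lens kF ℓ, ‖K r s‖ ≤ g * kF⁻¹ * (lam ℓ r + lam ℓ s)⁻¹) →
      ∀ m : ℕ, 1 ≤ m →
        normMax2 kF ℓ (matPowC K m) ≤ (C * g) ^ m * kF ^ (-(1 / 2) : ℝ) ∧
        normMax1 kF ℓ (matPowC K m) ≤ (C * g) ^ m ∧
        normHSC kF ℓ (matPowC K m) ≤ (C * g) ^ m ∧
        ∀ q ∈ lens kF ℓ,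
          (∀ r ∈ lens kF ℓ, ‖matPowC K m r q‖ ≤ (C * g) ^ m * kF⁻¹ * (efun kF q)⁻¹) ∧
          Real.sqrt (∑' r : Z3, if r ∈ lens kF ℓ then ‖matPowC K m r q‖ ^ 2 else 0)
            ≤ (C * g) ^ m * kF ^ (-(1 / 2) : ℝ) * (efun kF q) ^ (-(1 / 2) : ℝ) := by
  refine ⟨200000, by norm_num, ?_⟩
  intro kF hk ℓ hℓ g hg K h0 hK m hm
  obtain ⟨m, rfl⟩ := Nat.exists_eq_add_of_le' hm
  have hk0 : 0 < kF := by linarith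
  set L : Finset Z3 := (lens_finite kF ℓ).toFinset with hLdef
  have hL : ∀ p, p ∈ L ↔ p ∈ lens kF ℓ := fun p => (lens_finite kF ℓ).mem_toFinset
  have hsum := lens_sum_le hk hℓ L fun p hp => (hL p).mp hp
  have hent := matPow_entry_le hk (by norm_num) hg L hL hsum h0 hK m
  set A := matPowC K (m + 1)
  set M : ℝ := g * (200000 * g) ^ m with hM
  have hM0 : 0 ≤ M := by positivity
  have hCM : (200000 * g) ^ (m + 1) = 200000 * M := by rw [hM, pow_succ]; ring
  rw [hCM]
  have hinv : ∀ p ∈ lens kF ℓ, 0 ≤ (lam ℓ p)⁻¹ := fun p hp =>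
    inv_nonneg.mpr (by linarith [half_le_lam hp])
  have hinv2 : ∀ p ∈ lens kF ℓ, (lam ℓ p)⁻¹ ≤ 2 := fun p hp => by
    have := inv_anti₀ (by norm_num) (half_le_lam hp)
    norm_num at this
    exact this
  have hrow : ∀ p ∈ lens kF ℓ, ⨆ q ∈ lens kF ℓ, ‖A p q‖ ≤ M * kF⁻¹ * (lam ℓ p)⁻¹ := fun p hp =>
    iSup_lens_le (mul_nonneg (by positivity) (hinv p hp)) fun q hq => (hent p hp q hq).1
  have hS0 : 0 ≤ ∑ p ∈ L, (lam ℓ p)⁻¹ := Finset.sum_nonneg fun p hp => hinv p ((hL p).mp hp)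
  have hrp : (kF ^ (-(1 / 2) : ℝ)) ^ 2 = kF⁻¹ := by
    rw [← Real.rpow_natCast, ← Real.rpow_mul hk0.le, ← Real.rpow_neg_one]
    norm_num
  refine ⟨?_, ?_, ?_, ?_⟩
  · refine Real.sqrt_le_iff.mpr ⟨by positivity, ?_⟩
    rw [tsum_eq_sum (s := L) fun p hp => if_neg fun h => hp ((hL p).mpr h), mul_pow, hrp]
    calc _ ≤ ∑ p ∈ L, 2 * (M * kF⁻¹) ^ 2 * (lam ℓ p)⁻¹ := by
          refine Finset.sum_le_sum fun p hp => ?_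
          have hp := (hL p).mp hp
          rw [if_pos hp]
          calc _ ≤ (M * kF⁻¹ * (lam ℓ p)⁻¹) ^ 2 :=
                pow_le_pow_left₀ (iSup_lens_nonneg _ _ _) (hrow p hp) 2
            _ = (M * kF⁻¹) ^ 2 * (lam ℓ p)⁻¹ * (lam ℓ p)⁻¹ := by ring
            _ ≤ (M * kF⁻¹) ^ 2 * (lam ℓ p)⁻¹ * 2 := by
                have := hinv p hp
                gcongr
                exact hinv2 p hp
            _ = _ := by ring
      _ = 2 * (M * kF⁻¹) ^ 2 * ∑ p ∈ L, (lam ℓ p)⁻¹ := by rw [Finset.mul_sum]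
      _ ≤ 2 * (M * kF⁻¹) ^ 2 * (200000 * kF) := by gcongr
      _ = 400000 * (M ^ 2 * kF⁻¹) := by field_simp; ring
      _ ≤ 200000 ^ 2 * (M ^ 2 * kF⁻¹) := by gcongr; norm_num
      _ = _ := by ring
  · rw [normMax1, tsum_eq_sum (s := L) fun p hp => if_neg fun h => hp ((hL p).mpr h)]
    calc _ ≤ ∑ p ∈ L, M * kF⁻¹ * (lam ℓ p)⁻¹ := by
          refine Finset.sum_le_sum fun p hp => ?_
          have hp := (hL p).mp hp
          rw [if_pos hp]
          exact hrow p hp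
      _ = M * kF⁻¹ * ∑ p ∈ L, (lam ℓ p)⁻¹ := by rw [Finset.mul_sum]
      _ ≤ M * kF⁻¹ * (200000 * kF) := by gcongr
      _ = _ := by field_simp
  · refine Real.sqrt_le_iff.mpr ⟨by positivity, ?_⟩
    rw [tsum_eq_sum (s := L ×ˢ L) fun p hp => if_neg fun h =>
      hp (Finset.mem_product.mpr ⟨(hL _).mpr h.1, (hL _).mpr h.2⟩), Finset.sum_product]
    calc _ ≤ ∑ p ∈ L, ∑ q ∈ L, (M * kF⁻¹) ^ 2 * ((lam ℓ p)⁻¹ * (lam ℓ q)⁻¹) := by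
          refine Finset.sum_le_sum fun p hp => Finset.sum_le_sum fun q hq => ?_
          have hp := (hL p).mp hp
          have hq := (hL q).mp hq
          rw [if_pos ⟨hp, hq⟩]
          calc _ = ‖A p q‖ * ‖A p q‖ := sq _
            _ ≤ (M * kF⁻¹ * (lam ℓ p)⁻¹) * (M * kF⁻¹ * (lam ℓ q)⁻¹) :=
              mul_le_mul (hent p hp q hq).1 (hent p hp q hq).2 (norm_nonneg _)
                (mul_nonneg (by positivity) (hinv p hp))
            _ = _ := by ring
      _ = (M * kF⁻¹) ^ 2 * (∑ p ∈ L, (lam ℓ p)⁻¹) ^ 2 := by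
          rw [sq (∑ p ∈ L, (lam ℓ p)⁻¹), Finset.sum_mul_sum, Finset.mul_sum]
          exact Finset.sum_congr rfl fun p _ => by rw [Finset.mul_sum]
      _ ≤ (M * kF⁻¹) ^ 2 * (200000 * kF) ^ 2 := by gcongr
      _ = _ := by field_simp
  · intro q hq
    obtain ⟨he0, he⟩ := half_le_efun hq
    have he1 : 0 < efun kF q := by linarith
    have hle : (lam ℓ q)⁻¹ ≤ 2 * (efun kF q)⁻¹ := by
      have := inv_anti₀ he1 he
      rw [mul_inv] at this
      linarith
    refine ⟨fun r hr => ?_, ?_⟩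
    · calc _ ≤ M * kF⁻¹ * (lam ℓ q)⁻¹ := (hent r hr q hq).2
        _ ≤ M * kF⁻¹ * (2 * (efun kF q)⁻¹) := by gcongr
        _ = 2 * (M * kF⁻¹ * (efun kF q)⁻¹) := by ring
        _ ≤ 200000 * (M * kF⁻¹ * (efun kF q)⁻¹) := by gcongr; norm_num
        _ = _ := by ring
    · refine Real.sqrt_le_iff.mpr ⟨by positivity, ?_⟩
      have hre : (efun kF q ^ (-(1 / 2) : ℝ)) ^ 2 = (efun kF q)⁻¹ := by
        rw [← Real.rpow_natCast, ← Real.rpow_mul he1.le, ← Real.rpow_neg_one]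
        norm_num
      rw [tsum_eq_sum (s := L) fun p hp => if_neg fun h => hp ((hL p).mpr h), mul_pow, mul_pow,
        hrp, hre]
      have hq0 := hinv q hq
      calc _ ≤ ∑ r ∈ L, (M * kF⁻¹) ^ 2 * (lam ℓ q)⁻¹ * (lam ℓ r)⁻¹ := by
            refine Finset.sum_le_sum fun r hr => ?_
            have hr := (hL r).mp hr
            rw [if_pos hr]
            calc _ = ‖A r q‖ * ‖A r q‖ := sq _
              _ ≤ (M * kF⁻¹ * (lam ℓ r)⁻¹) * (M * kF⁻¹ * (lam ℓ q)⁻¹) :=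
                mul_le_mul (hent r hr q hq).1 (hent r hr q hq).2 (norm_nonneg _)
                  (mul_nonneg (by positivity) (hinv r hr))
              _ = _ := by ring
        _ = (M * kF⁻¹) ^ 2 * (lam ℓ q)⁻¹ * ∑ r ∈ L, (lam ℓ r)⁻¹ := by rw [Finset.mul_sum]
        _ ≤ (M * kF⁻¹) ^ 2 * (2 * (efun kF q)⁻¹) * (200000 * kF) :=
          mul_le_mul (mul_le_mul_of_nonneg_left hle (by positivity)) hsum hS0 (by positivity)
        _ = 400000 * (M ^ 2 * kF⁻¹ * (efun kF q)⁻¹) := by field_simp; ring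
        _ ≤ 200000 ^ 2 * (M ^ 2 * kF⁻¹ * (efun kF q)⁻¹) := by gcongr; norm_num
        _ = _ := by ring
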